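/- Let (X,T) be a topological dynamical system given by a continuous ℤ^d-action on a compact metric space, let μ be an ergodic T-invariant Borel probability measure, and let f ∈ L²(X,μ). The following are equivalent: (1) (X,T) is μ-f-mean sensitive; (2) (X,T) is μ-f-mean expansive; (3) there exists ε > 0 such that for μ-almost every x, μ({y : d_f(x,y) ≤ ε}) = 0; (4) (X,T) is not μ-f-mean equicontinuous. -/

import Mathlib

open MeasureTheory Filter Finset Metric
open scoped Classical

noncomputable section

/-- The box `{0,…,n−1}^d` inside `ℤ^d`. -/
def Fbox (d n : ℕ) : Finset (Fin d → ℤ) :=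
  Fintype.piFinset fun _ => Finset.Icc (0 : ℤ) ((n : ℤ) - 1)

/-- Upper density of a subset of `ℤ^d` along the boxes `F_n`. -/
def upperDensity (d : ℕ) (S : Set (Fin d → ℤ)) : ℝ :=
  Filter.limsup
    (fun n : ℕ => (((Fbox d n).filter (fun j => j ∈ S)).card : ℝ) / ((Fbox d n).card : ℝ))
    Filter.atTop

/-- Lower density of a subset of `ℤ^d` along the boxes `F_n`. -/
def lowerDensity (d : ℕ) (S : Set (Fin d → ℤ)) : ℝ :=
  Filter.liminf
    (fun n : ℕ => (((Fbox d n).filter (fun j => j ∈ S)).card : ℝ) / ((Fbox d n).card : ℝ))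
    Filter.atTop

variable {X : Type*}

/-- The pseudometric `d_f(x,y) = limsup_n ((1/|F_n|) Σ_{j∈F_n} |f(T^j x) − f(T^j y)|²)^{1/2}`. -/
def dF {d : ℕ} (T : (Fin d → ℤ) → X → X) (f : X → ℂ) (x y : X) : ℝ :=
  Filter.limsup (fun n : ℕ =>
    Real.sqrt ((∑ j ∈ Fbox d n, ‖f (T j x) - f (T j y)‖ ^ 2) / ((Fbox d n).card : ℝ)))
    Filter.atTop

/-- The pseudometric `ρ_f(x,y) = inf {ε > 0 : D̄({i : |f(T^i x) − f(T^i y)| > ε}) < ε}`. -/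
def rhoF {d : ℕ} (T : (Fin d → ℤ) → X → X) (f : X → ℂ) (x y : X) : ℝ :=
  sInf {ε : ℝ | 0 < ε ∧ upperDensity d {i | ε < ‖f (T i x) - f (T i y)‖} < ε}

/-- `x` is a generic point for `|f|²`:
the Birkhoff averages of `|f|²` along `x` converge to `∫ |f|² dμ`. -/
def genericSq {d : ℕ} [MeasurableSpace X] (μ : Measure X) (T : (Fin d → ℤ) → X → X)
    (f : X → ℂ) (x : X) : Prop :=
  Filter.Tendsto
    (fun n : ℕ => (∑ j ∈ Fbox d n, ‖f (T j x)‖ ^ 2) / ((Fbox d n).card : ℝ))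
    Filter.atTop (nhds (∫ y, ‖f y‖ ^ 2 ∂μ))

/-- `ε` is a `μ`-sensitivity constant for `f`: every positive measure set contains two
generic points `x, y` with `d_f(x,y) > ε`. -/
def SensitivityConstant {d : ℕ} [MeasurableSpace X] (μ : Measure X)
    (T : (Fin d → ℤ) → X → X) (f : X → ℂ) (ε : ℝ) : Prop :=
  0 < ε ∧ ∀ A : Set X, MeasurableSet A → 0 < μ A →
    ∃ x ∈ A, ∃ y ∈ A, genericSq μ T f x ∧ genericSq μ T f y ∧ ε < dF T f x y

/-- `f` is `μ`-mean sensitive (`f ∈ H_ms`). -/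
def MeanSensitiveFun {d : ℕ} [MeasurableSpace X] (μ : Measure X)
    (T : (Fin d → ℤ) → X → X) (f : X → ℂ) : Prop :=
  ∃ ε : ℝ, SensitivityConstant μ T f ε

/-- `f` is `μ`-mean expansive: for some `ε > 0`, `μ×μ {(x,y) : d_f(x,y) > ε} = 1`. -/
def MeanExpansiveFun {d : ℕ} [MeasurableSpace X] (μ : Measure X)
    (T : (Fin d → ℤ) → X → X) (f : X → ℂ) : Prop :=
  ∃ ε : ℝ, 0 < ε ∧ (μ.prod μ) {p : X × X | ε < dF T f p.1 p.2} = 1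

/-- `(X,T)` is `μ-f`-mean equicontinuous. -/
def MuFMeanEquicont {d : ℕ} [MetricSpace X] [MeasurableSpace X] (μ : Measure X)
    (T : (Fin d → ℤ) → X → X) (f : X → ℂ) : Prop :=
  ∀ τ : ℝ, 0 < τ → ∃ M : Set X, IsCompact M ∧ 1 - ENNReal.ofReal τ ≤ μ M ∧
    ∀ ε : ℝ, 0 < ε → ∃ δ : ℝ, 0 < δ ∧
      ∀ x ∈ M, ∀ y ∈ M, dist x y ≤ δ → rhoF T f x y ≤ ε

open scoped BigOperators

/-!
By Wiener's pointwise ergodic theorem almost every point is generic for `|f|²`. Shifting two generic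
points by an element of `ℕ^d` does not increase `d_f`, so `x ↦ μ {y | d_f(x,y) ≤ ε}` is almost
everywhere equal to a constant. If this constant vanishes for some `ε`, Fubini gives expansivity,
and sensitivity is immediate. If it is positive for every `ε`, finitely many `d_f`-balls of radius
`2ε` cover almost all of `X`, and compact sets inside these balls give mean equicontinuity.
Sensitivity excludes equicontinuity because a small `ρ_f` forces a small `d_f` on points that are
generic for the tails of `|f|²`.
-/

section Box

variable {d : ℕ}

lemma mem_Fbox {n : ℕ} {j : Fin d → ℤ} : j ∈ Fbox d n ↔ ∀ k, 0 ≤ j k ∧ j k < n := by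
  simp only [Fbox, Fintype.mem_piFinset, Finset.mem_Icc, Int.le_sub_one_iff]

lemma card_Fbox (d n : ℕ) : #(Fbox d n) = n ^ d := by
  simp [Fbox, Fintype.card_piFinset]

lemma Fbox_nonempty {n : ℕ} (hn : n ≠ 0) : (Fbox d n).Nonempty :=
  ⟨0, mem_Fbox.2 fun _ ↦ ⟨le_rfl, by simpa using Nat.pos_of_ne_zero hn⟩⟩

lemma Fbox_mono {m n : ℕ} (hmn : m ≤ n) : Fbox d m ⊆ Fbox d n := fun j hj ↦
  mem_Fbox.2 fun k ↦ ⟨(mem_Fbox.1 hj k).1, (mem_Fbox.1 hj k).2.trans_le (by exact_mod_cast hmn)⟩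

lemma tendsto_card_Fbox_add_div (d K : ℕ) :
    Tendsto (fun n ↦ (#(Fbox d (n + K)) : ℝ) / #(Fbox d n)) atTop (nhds 1) := by
  have hbase : Tendsto (fun n : ℕ ↦ 1 + (K : ℝ) / n) atTop (nhds 1) := by
    simpa using (tendsto_const_div_atTop_nhds_zero_nat (K : ℝ)).const_add 1
  have hpow : Tendsto (fun n : ℕ ↦ (1 + (K : ℝ) / n) ^ d) atTop (nhds 1) := by
    simpa using hbase.pow d
  refine hpow.congr' ?_
  filter_upwards [eventually_ne_atTop 0] with n hn
  have hn' : (n : ℝ) ≠ 0 := by exact_mod_cast hn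
  rw [card_Fbox, card_Fbox, Nat.cast_pow, Nat.cast_pow, ← div_pow, Nat.cast_add, add_div,
    div_self hn']

lemma le_of_forall_mul_card_Fbox_le {a b : ENNReal} (K : ℕ)
    (h : ∀ n, a * #(Fbox d n) ≤ b * #(Fbox d (n + K))) : a ≤ b := by
  have hlim := ENNReal.Tendsto.const_mul (a := b)
    (ENNReal.tendsto_ofReal (tendsto_card_Fbox_add_div d K)) (.inl (by simp))
  rw [ENNReal.ofReal_one, mul_one] at hlim
  refine ge_of_tendsto hlim ?_
  filter_upwards [eventually_ne_atTop 0] with n hn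
  have hpos : 0 < #(Fbox d n) := card_pos.2 (Fbox_nonempty hn)
  rw [ENNReal.ofReal_div_of_pos (by exact_mod_cast hpos), ENNReal.ofReal_natCast,
    ENNReal.ofReal_natCast, ← mul_div_assoc,
    ENNReal.le_div_iff_mul_le (.inl (by exact_mod_cast hpos.ne')) (.inl (by simp))]
  exact h n

/-- The translate `j + F_n` of the box `F_n`, that is, the box of side `n` with corner `j`. -/
def boxAt (j : Fin d → ℤ) (n : ℕ) : Finset (Fin d → ℤ) :=
  (Fbox d n).map (addRightEmbedding j)

lemma mem_boxAt {n : ℕ} {i j : Fin d → ℤ} : i ∈ boxAt j n ↔ ∀ k, j k ≤ i k ∧ i k < j k + n := by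
  have hshift : i ∈ boxAt j n ↔ i - j ∈ Fbox d n := by
    simp [boxAt, ← eq_sub_iff_add_eq]
  rw [hshift, mem_Fbox]
  simp only [Pi.sub_apply, sub_nonneg, sub_lt_iff_lt_add']

lemma card_boxAt (j : Fin d → ℤ) (n : ℕ) : #(boxAt j n) = #(Fbox d n) := card_map _

lemma sum_boxAt {M : Type*} [AddCommMonoid M] (a : (Fin d → ℤ) → M) (j : Fin d → ℤ) (n : ℕ) :
    ∑ i ∈ boxAt j n, a i = ∑ i ∈ Fbox d n, a (i + j) := sum_map _ _ _

lemma exists_boxAt_subset_Fbox {i : Fin d → ℤ} (hi : 0 ≤ i) :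
    ∃ K, ∀ n, boxAt i n ⊆ Fbox d (n + K) := by
  refine ⟨∑ k, (i k).toNat, fun n j hj ↦ mem_Fbox.2 fun k ↦ ?_⟩
  have hle : (i k).toNat ≤ ∑ k, (i k).toNat :=
    single_le_sum_of_canonicallyOrdered (f := fun k ↦ (i k).toNat) (mem_univ k)
  have hik : 0 ≤ i k := hi k
  have hjk := mem_boxAt.1 hj k
  grind

lemma abs_sum_Fbox_sub_le {a : (Fin d → ℤ) → ℝ} {C : ℝ} (ha : ∀ j, |a j| ≤ C) {i : Fin d → ℤ}
    {n K : ℕ} (hK : boxAt i n ⊆ Fbox d (n + K)) :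
    |∑ j ∈ Fbox d n, (a (j + i) - a j)| ≤ 2 * C * (#(Fbox d (n + K)) - #(Fbox d n)) := by
  have hdiff {s : Finset (Fin d → ℤ)} (hs : s ⊆ Fbox d (n + K)) :
      |∑ j ∈ Fbox d (n + K), a j - ∑ j ∈ s, a j| ≤ C * (#(Fbox d (n + K)) - #s) := by
    rw [← sum_sdiff_eq_sub hs, mul_comm, ← Nat.cast_sub (card_le_card hs),
      ← card_sdiff_of_subset hs, ← nsmul_eq_mul]
    exact (abs_sum_le_sum_abs _ _).trans (sum_le_card_nsmul _ _ _ fun j _ ↦ ha j)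
  have hbox := hdiff (Fbox_mono (Nat.le_add_right n K))
  have hshift := hdiff hK
  rw [card_boxAt, sum_boxAt] at hshift
  rw [sum_sub_distrib, ← sub_sub_sub_cancel_left _ _ (∑ j ∈ Fbox d (n + K), a j)]
  calc _ ≤ _ := abs_sub _ _
    _ ≤ _ := add_le_add hbox hshift
    _ = _ := by ring

lemma tendsto_expect_Fbox_sub {a : (Fin d → ℤ) → ℝ} {C : ℝ} (ha : ∀ j, |a j| ≤ C)
    {i : Fin d → ℤ} (hi : 0 ≤ i) :
    Tendsto (fun n ↦ 𝔼 j ∈ Fbox d n, (a (j + i) - a j)) atTop (nhds 0) := by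
  obtain ⟨K, hK⟩ := exists_boxAt_subset_Fbox hi
  have hratio : Tendsto (fun n ↦ 2 * C * ((#(Fbox d (n + K)) : ℝ) / #(Fbox d n) - 1))
      atTop (nhds 0) := by
    simpa using ((tendsto_card_Fbox_add_div d K).sub_const 1).const_mul (2 * C)
  refine squeeze_zero_norm' ?_ hratio
  filter_upwards [eventually_ne_atTop 0] with n hn
  have hcard : (0 : ℝ) < #(Fbox d n) := by exact_mod_cast card_pos.2 (Fbox_nonempty hn)
  rw [expect_eq_sum_div_card, norm_div, Real.norm_eq_abs, Real.norm_of_nonneg hcard.le,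
    div_le_iff₀ hcard, mul_assoc, sub_mul, div_mul_cancel₀ _ hcard.ne', one_mul]
  exact abs_sum_Fbox_sub_le ha (hK n)

lemma exists_pairwiseDisjoint_boxAt (S : Finset (Fin d → ℤ)) {r : (Fin d → ℤ) → ℕ}
    (hr : ∀ j ∈ S, (Fbox d (r j)).Nonempty) :
    ∃ u ⊆ S, (u : Set (Fin d → ℤ)).PairwiseDisjoint (fun j ↦ boxAt j (r j)) ∧
      #S ≤ 3 ^ d * ∑ j ∈ u, #(Fbox d (r j)) := by
  obtain ⟨u, huS, hdisj, hcover⟩ := Vitali.exists_disjoint_subfamily_covering_enlargement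
    (fun j ↦ (boxAt j (r j) : Set (Fin d → ℤ))) (S : Set (Fin d → ℤ)) (fun j ↦ (r j : ℝ)) 2
    one_lt_two (fun _ _ ↦ Nat.cast_nonneg _) (S.sup r : ℕ)
    (fun j hj ↦ by exact_mod_cast le_sup (f := r) hj)
    (fun j hj ↦ coe_nonempty.2 ((map_nonempty).2 (hr j hj)))
  lift u to Finset (Fin d → ℤ) using S.finite_toSet.subset huS
  refine ⟨u, by exact_mod_cast huS, fun i hi j hj hij ↦ disjoint_coe.1 (hdisj hi hj hij), ?_⟩
  have hsub : S ⊆ u.biUnion fun b ↦ boxAt (b - fun _ ↦ (2 * r b : ℤ)) (3 * r b) := by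
    intro j hj
    obtain ⟨b, hbu, ⟨i, hij, hib⟩, hle⟩ := hcover j hj
    refine mem_biUnion.2 ⟨b, hbu, mem_boxAt.2 fun k ↦ ?_⟩
    have hij := mem_boxAt.1 hij k
    have hib := mem_boxAt.1 hib k
    have hle : r j ≤ 2 * r b := by exact_mod_cast hle
    simp only [Pi.sub_apply]
    push_cast
    omega
  calc #S ≤ ∑ b ∈ u, #(boxAt (b - fun _ ↦ (2 * r b : ℤ)) (3 * r b)) :=
        (card_le_card hsub).trans card_biUnion_le
    _ = 3 ^ d * ∑ b ∈ u, #(Fbox d (r b)) := by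
        simp only [card_boxAt, card_Fbox, mul_pow, mul_sum]

lemma mul_card_le_sum_Fbox {a : (Fin d → ℤ) → ENNReal} {c : ENNReal} {L N : ℕ}
    {S : Finset (Fin d → ℤ)} (hSL : S ⊆ Fbox d L)
    (hS : ∀ j ∈ S, ∃ n ≤ N, c * #(Fbox d n) < ∑ i ∈ Fbox d n, a (i + j)) :
    c * #S ≤ 3 ^ d * ∑ i ∈ Fbox d (L + N), a i := by
  choose! r hrN hr using hS
  obtain ⟨u, huS, hdisj, hcard⟩ := exists_pairwiseDisjoint_boxAt S fun j hj ↦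
    nonempty_of_sum_ne_zero (ne_zero_of_lt (hr j hj))
  have hsub : u.biUnion (fun j ↦ boxAt j (r j)) ⊆ Fbox d (L + N) := by
    refine biUnion_subset.2 fun j hj i hi ↦ mem_Fbox.2 fun k ↦ ?_
    have hjL := mem_Fbox.1 (hSL (huS hj)) k
    have hji := mem_boxAt.1 hi k
    have hjN := hrN j (huS hj)
    push_cast
    omega
  calc c * #S ≤ c * (3 ^ d * ∑ j ∈ u, #(Fbox d (r j)) : ℕ) := by gcongr
    _ = 3 ^ d * ∑ j ∈ u, c * #(Fbox d (r j)) := by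
        push_cast
        rw [← mul_sum, mul_left_comm]
    _ ≤ 3 ^ d * ∑ j ∈ u, ∑ i ∈ boxAt j (r j), a i := by
        gcongr with j hj
        exact (hr j (huS hj)).le.trans_eq (sum_boxAt _ _ _).symm
    _ = 3 ^ d * ∑ i ∈ u.biUnion (fun j ↦ boxAt j (r j)), a i := by rw [sum_biUnion hdisj]
    _ ≤ 3 ^ d * ∑ i ∈ Fbox d (L + N), a i := by gcongr

end Box

section Maximal

variable {d : ℕ} [MeasurableSpace X] {T : (Fin d → ℤ) → X → X} {μ : Measure X}

lemma lintegral_comp_of_measurePreserving {α β : Type*} [MeasurableSpace α] [MeasurableSpace β]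
    {μ : Measure α} {ν : Measure β} {φ : α → β} (hφ : MeasurePreserving φ μ ν) {g : β → ENNReal}
    (hg : AEMeasurable g ν) : ∫⁻ x, g (φ x) ∂μ = ∫⁻ y, g y ∂ν := by
  rw [← hφ.map_eq] at hg ⊢
  exact (lintegral_map' hg hφ.aemeasurable).symm

lemma lintegral_sum_Fbox (hT : ∀ j, MeasurePreserving (T j) μ μ) {g : X → ENNReal}
    (hg : AEMeasurable g μ) (n : ℕ) :
    ∫⁻ x, ∑ j ∈ Fbox d n, g (T j x) ∂μ = #(Fbox d n) * ∫⁻ x, g x ∂μ := by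
  have hgT (j : Fin d → ℤ) : AEMeasurable (fun x ↦ g (T j x)) μ :=
    hg.comp_quasiMeasurePreserving (hT j).quasiMeasurePreserving
  rw [lintegral_finsetSum' _ fun j _ ↦ hgT j,
    sum_congr rfl fun j _ ↦ lintegral_comp_of_measurePreserving (hT j) hg, sum_const, nsmul_eq_mul]

lemma mul_measure_exists_le_lintegral (hadd : ∀ i j, T (i + j) = T i ∘ T j)
    (hT : ∀ j, MeasurePreserving (T j) μ μ) {g : X → ENNReal} (hg : AEMeasurable g μ)
    (c : ENNReal) (N : ℕ) :
    c * μ {x | ∃ n ≤ N, c * #(Fbox d n) < ∑ j ∈ Fbox d n, g (T j x)} ≤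
      3 ^ d * ∫⁻ x, g x ∂μ := by
  set E := {x | ∃ n ≤ N, c * #(Fbox d n) < ∑ j ∈ Fbox d n, g (T j x)} with hE
  have hgT (j : Fin d → ℤ) : AEMeasurable (fun x ↦ g (T j x)) μ :=
    hg.comp_quasiMeasurePreserving (hT j).quasiMeasurePreserving
  have hEm : NullMeasurableSet E μ := by
    have hunion : E = ⋃ n ≤ N, {x | c * #(Fbox d n) < ∑ j ∈ Fbox d n, g (T j x)} := by
      ext x
      simp [hE]
    rw [hunion]
    exact .iUnion fun n ↦ .iUnion fun _ ↦
      nullMeasurableSet_lt aemeasurable_const (aemeasurable_fun_sum _ fun j _ ↦ hgT j)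
  have hcount (L : ℕ) (x : X) : c * ∑ j ∈ Fbox d L, E.indicator 1 (T j x) ≤
      3 ^ d * ∑ j ∈ Fbox d (L + N), g (T j x) := by
    have hvisits : ∑ j ∈ Fbox d L, E.indicator 1 (T j x) =
        (#{j ∈ Fbox d L | T j x ∈ E} : ENNReal) := by
      simp only [Set.indicator_apply, Pi.one_apply, card_filter, Nat.cast_sum, Nat.cast_ite,
        Nat.cast_one, Nat.cast_zero]
    rw [hvisits]
    refine mul_card_le_sum_Fbox (filter_subset _ _) fun j hj ↦ ?_
    obtain ⟨n, hn, hlt⟩ := (mem_filter.1 hj).2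
    exact ⟨n, hn, by simpa only [hadd, Function.comp_apply] using hlt⟩
  refine le_of_forall_mul_card_Fbox_le (d := d) N fun L ↦ ?_
  have hind : AEMeasurable (E.indicator (1 : X → ENNReal)) μ := aemeasurable_one.indicator₀ hEm
  calc c * μ E * #(Fbox d L) = c * ∫⁻ x, ∑ j ∈ Fbox d L, E.indicator 1 (T j x) ∂μ := by
        rw [lintegral_sum_Fbox hT hind, lintegral_indicator_one₀ hEm, mul_assoc, mul_comm (μ E)]
    _ ≤ ∫⁻ x, c * ∑ j ∈ Fbox d L, E.indicator 1 (T j x) ∂μ := lintegral_const_mul_le _ _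
    _ ≤ ∫⁻ x, 3 ^ d * ∑ j ∈ Fbox d (L + N), g (T j x) ∂μ := lintegral_mono (hcount L)
    _ = 3 ^ d * (∫⁻ x, g x ∂μ) * #(Fbox d (L + N)) := by
        rw [lintegral_const_mul' _ _ (by simp), lintegral_sum_Fbox hT hg, mul_assoc,
          mul_comm (#(_) : ENNReal)]

theorem mul_measure_exists_lt_sum_le_lintegral (hadd : ∀ i j, T (i + j) = T i ∘ T j)
    (hT : ∀ j, MeasurePreserving (T j) μ μ) {g : X → ENNReal} (hg : AEMeasurable g μ)
    (c : ENNReal) :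
    c * μ {x | ∃ n, c * #(Fbox d n) < ∑ j ∈ Fbox d n, g (T j x)} ≤ 3 ^ d * ∫⁻ x, g x ∂μ := by
  have hunion : {x | ∃ n, c * #(Fbox d n) < ∑ j ∈ Fbox d n, g (T j x)} =
      ⋃ N, {x | ∃ n ≤ N, c * #(Fbox d n) < ∑ j ∈ Fbox d n, g (T j x)} := by
    ext x
    simp only [Set.mem_ofPred_eq, Set.mem_iUnion]
    exact ⟨fun ⟨n, hn⟩ ↦ ⟨n, n, le_rfl, hn⟩, fun ⟨_, n, _, hn⟩ ↦ ⟨n, hn⟩⟩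
  have hmono : Monotone fun N ↦ {x | ∃ n ≤ N, c * #(Fbox d n) < ∑ j ∈ Fbox d n, g (T j x)} :=
    fun _ _ hab x ⟨n, hn, hlt⟩ ↦ ⟨n, hn.trans hab, hlt⟩
  rw [hunion, hmono.measure_iUnion, ENNReal.mul_iSup]
  exact iSup_le fun N ↦ mul_measure_exists_le_lintegral hadd hT hg c N

end Maximal

section BirkhoffLimit

variable {d : ℕ} [MeasurableSpace X] {T : (Fin d → ℤ) → X → X} {μ : Measure X} {u v : X → ℝ}

/-- The conclusion of the pointwise ergodic theorem for `u`: almost everywhere the averages of `u`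
over the orbit segments `{T^j x : j ∈ F_n}` converge to the integral of `u`. -/
def HasBirkhoffLimit (T : (Fin d → ℤ) → X → X) (μ : Measure X) (u : X → ℝ) : Prop :=
  ∀ᵐ x ∂μ, Tendsto (fun n ↦ 𝔼 j ∈ Fbox d n, u (T j x)) atTop (nhds (∫ y, u y ∂μ))

lemma ae_forall_comp (hT : ∀ j, MeasurePreserving (T j) μ μ) {p : X → Prop} (h : ∀ᵐ x ∂μ, p x) :
    ∀ᵐ x ∂μ, ∀ j, p (T j x) :=
  ae_all_iff.2 fun j ↦ (hT j).quasiMeasurePreserving.ae h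

lemma HasBirkhoffLimit.congr (hT : ∀ j, MeasurePreserving (T j) μ μ)
    (hu : HasBirkhoffLimit T μ u) (huv : u =ᵐ[μ] v) : HasBirkhoffLimit T μ v := by
  unfold HasBirkhoffLimit
  rw [← integral_congr_ae huv]
  filter_upwards [hu, ae_forall_comp hT huv] with x hx hxv
  simpa only [hxv] using hx

lemma HasBirkhoffLimit.add (hu : HasBirkhoffLimit T μ u) (hv : HasBirkhoffLimit T μ v)
    (hui : Integrable u μ) (hvi : Integrable v μ) :
    HasBirkhoffLimit T μ fun x ↦ u x + v x := by
  unfold HasBirkhoffLimit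
  rw [integral_add hui hvi]
  filter_upwards [hu, hv] with x hux hvx
  simpa only [expect_add_distrib] using hux.add hvx

lemma HasBirkhoffLimit.const_mul (hu : HasBirkhoffLimit T μ u) (c : ℝ) :
    HasBirkhoffLimit T μ fun x ↦ c * u x := by
  unfold HasBirkhoffLimit
  rw [integral_const_mul]
  filter_upwards [hu] with x hux
  simpa only [mul_expect] using hux.const_mul c

lemma hasBirkhoffLimit_const [IsProbabilityMeasure μ] (c : ℝ) :
    HasBirkhoffLimit T μ fun _ ↦ c := by
  refine ae_of_all _ fun x ↦ tendsto_const_nhds.congr' ?_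
  filter_upwards [eventually_ne_atTop 0] with n hn
  rw [expect_const (Fbox_nonempty hn), integral_const, probReal_univ, one_smul]

lemma mul_measure_not_eventually_le (hadd : ∀ i j, T (i + j) = T i ∘ T j)
    (hT : ∀ j, MeasurePreserving (T j) μ μ) (hu : Integrable u μ) (hv : Integrable v μ)
    (hvlim : HasBirkhoffLimit T μ v) {ε : ℝ} (hε : 0 < ε)
    (huv : eLpNorm (u - v) 1 μ ≤ ENNReal.ofReal ε) :
    ENNReal.ofReal ε *
        μ {x | ¬ ∀ᶠ n in atTop, |𝔼 j ∈ Fbox d n, u (T j x) - ∫ y, u y ∂μ| ≤ 3 * ε} ≤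
      3 ^ d * eLpNorm (u - v) 1 μ := by
  have hmaximal := mul_measure_exists_lt_sum_le_lintegral hadd hT
    (hu.sub hv).aestronglyMeasurable.enorm (ENNReal.ofReal ε)
  rw [← eLpNorm_one_eq_lintegral_enorm] at hmaximal
  refine le_trans ?_ hmaximal
  gcongr 1
  refine measure_mono_ae ?_
  filter_upwards [hvlim] with x hx
  refine fun hnot ↦ by_contra fun hsmall ↦ hnot ?_
  have hintegral : |∫ y, v y ∂μ - ∫ y, u y ∂μ| ≤ ε := by
    rw [abs_sub_comm, ← integral_sub hu hv, ← Real.norm_eq_abs]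
    exact (norm_integral_le_lintegral_norm _).trans
      (ENNReal.toReal_le_of_le_ofReal hε.le (by
        simpa only [eLpNorm_one_eq_lintegral_enorm, ofReal_norm, Pi.sub_apply] using huv))
  filter_upwards [Metric.tendsto_nhds.1 hx ε hε, eventually_ne_atTop 0] with n hvn hn
  have hcard : (0 : ℝ) < #(Fbox d n) := by exact_mod_cast card_pos.2 (Fbox_nonempty hn)
  have haverage : |𝔼 j ∈ Fbox d n, u (T j x) - 𝔼 j ∈ Fbox d n, v (T j x)| ≤ ε := by
    have hsum := (enorm_sum_le (Fbox d n) fun j ↦ (u - v) (T j x)).trans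
      (not_lt.1 fun h ↦ hsmall ⟨n, h⟩)
    rw [Real.enorm_eq_ofReal_abs, ← ENNReal.ofReal_natCast, ← ENNReal.ofReal_mul hε.le,
      ENNReal.ofReal_le_ofReal_iff (by positivity)] at hsum
    rwa [← expect_sub_distrib, expect_eq_sum_div_card, abs_div, abs_of_pos hcard,
      div_le_iff₀ hcard]
  rw [Real.dist_eq] at hvn
  rw [abs_le] at *
  rw [abs_lt] at hvn
  constructor <;> linarith

theorem hasBirkhoffLimit_of_forall_exists (hadd : ∀ i j, T (i + j) = T i ∘ T j)
    (hT : ∀ j, MeasurePreserving (T j) μ μ) (hu : Integrable u μ)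
    (happrox : ∀ ε : ENNReal, ε ≠ 0 →
      ∃ v, Integrable v μ ∧ HasBirkhoffLimit T μ v ∧ eLpNorm (u - v) 1 μ ≤ ε) :
    HasBirkhoffLimit T μ u := by
  have hclose (ε : ℝ) (hε : 0 < ε) :
      ∀ᵐ x ∂μ, ∀ᶠ n in atTop, |𝔼 j ∈ Fbox d n, u (T j x) - ∫ y, u y ∂μ| ≤ 3 * ε := by
    rw [ae_iff]
    have hε' : ENNReal.ofReal ε ≠ 0 := by simpa using hε
    refine (mul_eq_zero.1 (le_zero_iff.1 (ENNReal.le_of_forall_pos_le_add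
      fun η hη _ ↦ ?_))).resolve_left hε'
    obtain ⟨v, hv, hvlim, huv⟩ := happrox (min (ENNReal.ofReal ε) (η / 3 ^ d))
      (by simp [hε, hη.ne'])
    calc _ ≤ 3 ^ d * eLpNorm (u - v) 1 μ :=
          mul_measure_not_eventually_le hadd hT hu hv hvlim hε (huv.trans (min_le_left _ _))
      _ ≤ 3 ^ d * (η / 3 ^ d) := by gcongr; exact huv.trans (min_le_right _ _)
      _ ≤ 0 + η := by rw [zero_add]; exact ENNReal.mul_div_le
  have hclose_nat : ∀ᵐ x ∂μ, ∀ m : ℕ, ∀ᶠ n in atTop,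
      |𝔼 j ∈ Fbox d n, u (T j x) - ∫ y, u y ∂μ| ≤ 3 * (1 / (m + 1)) :=
    ae_all_iff.2 fun m ↦ hclose _ Nat.one_div_pos_of_nat
  filter_upwards [hclose_nat] with x hx
  refine Metric.tendsto_nhds.2 fun ε hε ↦ ?_
  obtain ⟨m, hm⟩ := exists_nat_one_div_lt (show 0 < ε / 3 by positivity)
  filter_upwards [hx m] with n hn
  rw [Real.dist_eq]
  linarith

lemma integral_comp_sub_eq_zero (hT : ∀ j, MeasurePreserving (T j) μ μ) {w : X → ℝ}
    (hw : Integrable w μ) (i : Fin d → ℤ) : ∫ x, (w (T i x) - w x) ∂μ = 0 := by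
  have hcomp : ∫ x, w (T i x) ∂μ = ∫ x, w x ∂μ := by
    have hwi : AEStronglyMeasurable w (μ.map (T i)) := by
      rw [(hT i).map_eq]
      exact hw.aestronglyMeasurable
    rw [← integral_map (hT i).aemeasurable hwi, (hT i).map_eq]
  exact (integral_sub ((hT i).integrable_comp_of_integrable hw) hw).trans (sub_eq_zero.2 hcomp)

lemma hasBirkhoffLimit_comp_sub (hadd : ∀ i j, T (i + j) = T i ∘ T j)
    (hT : ∀ j, MeasurePreserving (T j) μ μ) {w : X → ℝ} (hw : Integrable w μ)
    {i : Fin d → ℤ} (hi : 0 ≤ i) : HasBirkhoffLimit T μ fun x ↦ w (T i x) - w x := by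
  refine hasBirkhoffLimit_of_forall_exists hadd hT
    (((hT i).integrable_comp_of_integrable hw).sub hw) fun ε hε ↦ ?_
  obtain ⟨s, hs, hsw⟩ := (memLp_one_iff_integrable.2 hw).exists_simpleFunc_eLpNorm_sub_lt
    ENNReal.one_ne_top (ENNReal.half_pos hε).ne'
  have hsi : Integrable s μ := memLp_one_iff_integrable.1 hsw
  obtain ⟨C, hC⟩ := s.exists_forall_norm_le
  refine ⟨fun x ↦ s (T i x) - s x, ((hT i).integrable_comp_of_integrable hsi).sub hsi, ?_, ?_⟩
  · unfold HasBirkhoffLimit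
    rw [integral_comp_sub_eq_zero hT hsi]
    refine ae_of_all _ fun x ↦ ?_
    have hshift (j : Fin d → ℤ) : T i (T j x) = T (j + i) x := by rw [add_comm, hadd]; rfl
    simpa only [hshift] using tendsto_expect_Fbox_sub (fun j ↦ hC (T j x)) hi
  have hws := (hw.sub hsi).aestronglyMeasurable
  have hdecomp : ((fun x ↦ w (T i x) - w x) - fun x ↦ s (T i x) - s x) =
      (w - ⇑s) ∘ T i - (w - ⇑s) := by
    ext x
    simp only [Pi.sub_apply, Function.comp_apply]
    ring
  calc _ ≤ eLpNorm ((w - ⇑s) ∘ T i) 1 μ + eLpNorm (w - ⇑s) 1 μ := by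
        rw [hdecomp]
        exact eLpNorm_sub_le (hws.comp_measurePreserving (hT i)) hws le_rfl
    _ ≤ ε / 2 + ε / 2 := by
        rw [eLpNorm_comp_measurePreserving hws (hT i)]
        gcongr
    _ = ε := ENNReal.add_halves ε

end BirkhoffLimit

section ErgodicTheorem

variable {d : ℕ} [MeasurableSpace X] {T : (Fin d → ℤ) → X → X} {μ : Measure X}

lemma ae_forall_preimage_eq (hadd : ∀ i j, T (i + j) = T i ∘ T j)
    (hT : ∀ j, MeasurePreserving (T j) μ μ) {A : Set X}
    (hinv : ∀ i, 0 ≤ i → T i ⁻¹' A =ᵐ[μ] A) (j : Fin d → ℤ) : T j ⁻¹' A =ᵐ[μ] A := by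
  have hpos : T j⁺ = T j⁻ ∘ T j := by
    rw [← hadd, ← sub_eq_iff_eq_add'.1 (posPart_sub_negPart j)]
  have hneg : T j⁺ ⁻¹' A =ᵐ[μ] T j ⁻¹' A := by
    rw [hpos, Set.preimage_comp]
    exact (hT j).quasiMeasurePreserving.preimage_ae_eq (hinv _ (negPart_nonneg j))
  exact hneg.symm.trans (hinv _ (posPart_nonneg j))

lemma measure_eq_zero_or_one_of_preimage_ae_eq (hadd : ∀ i j, T (i + j) = T i ∘ T j)
    (hT : ∀ j, MeasurePreserving (T j) μ μ)
    (herg : ∀ A, MeasurableSet A → (∀ j, T j ⁻¹' A = A) → μ A = 0 ∨ μ A = 1)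
    {A : Set X} (hA : NullMeasurableSet A μ) (hinv : ∀ i, 0 ≤ i → T i ⁻¹' A =ᵐ[μ] A) :
    μ A = 0 ∨ μ A = 1 := by
  obtain ⟨B, -, hB, hBA⟩ := hA.exists_measurable_subset_ae_eq
  have hinter : ⋂ j, T j ⁻¹' B =ᵐ[μ] A := by
    have hall := Filter.EventuallyEq.countable_iInter fun j ↦
      ((hT j).quasiMeasurePreserving.preimage_ae_eq hBA).trans
        (ae_forall_preimage_eq hadd hT hinv j)
    rwa [Set.iInter_const] at hall
  rw [← measure_congr hinter]
  refine herg _ (.iInter fun j ↦ (hT j).measurable hB) fun j ↦ ?_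
  rw [Set.preimage_iInter]
  simp only [← Set.preimage_comp, ← hadd]
  exact (Equiv.addRight j).surjective.iInter_comp fun i ↦ T i ⁻¹' B

lemma exists_ae_eq_const_of_comp_ae_eq [IsProbabilityMeasure μ]
    (hadd : ∀ i j, T (i + j) = T i ∘ T j) (hT : ∀ j, MeasurePreserving (T j) μ μ)
    (herg : ∀ A, MeasurableSet A → (∀ j, T j ⁻¹' A = A) → μ A = 0 ∨ μ A = 1)
    {β : Type*} [MeasurableSpace β] [MeasurableSpace.CountablySeparated β] [Nonempty β]
    {φ : X → β} (hφ : NullMeasurable φ μ) (hinv : ∀ i, 0 ≤ i → φ ∘ T i =ᵐ[μ] φ) :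
    ∃ c, φ =ᵐ[μ] fun _ ↦ c := by
  refine exists_eventuallyEq_const_of_forall_separating MeasurableSet fun U hU ↦ ?_
  refine (measure_eq_zero_or_one_of_preimage_ae_eq hadd hT herg (hφ hU)
    fun i hi ↦ (hinv i hi).preimage U).symm.imp ?_ ?_
  · exact fun h ↦ (mem_ae_iff_prob_eq_one₀ (hφ hU)).2 h
  · exact fun h ↦ measure_eq_zero_iff_ae_notMem.1 h

/-- The subspace of `L²(μ)` on which the conclusion of the pointwise ergodic theorem holds. -/
def birkhoffSubmodule [IsProbabilityMeasure μ] (hT : ∀ j, MeasurePreserving (T j) μ μ) :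
    Submodule ℝ (Lp ℝ 2 μ) where
  carrier := {v | HasBirkhoffLimit T μ v}
  add_mem' {v w} hv hw :=
    (HasBirkhoffLimit.add hv hw ((Lp.memLp v).integrable one_le_two)
      ((Lp.memLp w).integrable one_le_two)).congr hT (Lp.coeFn_add v w).symm
  zero_mem' := (hasBirkhoffLimit_const 0).congr hT (Lp.coeFn_zero ℝ 2 μ).symm
  smul_mem' c v hv := (HasBirkhoffLimit.const_mul hv c).congr hT (Lp.coeFn_smul c v).symm

lemma comp_ae_eq_of_mem_orthogonal_birkhoffSubmodule [IsProbabilityMeasure μ]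
    (hadd : ∀ i j, T (i + j) = T i ∘ T j) (hT : ∀ j, MeasurePreserving (T j) μ μ)
    {g : Lp ℝ 2 μ} (hg : g ∈ (birkhoffSubmodule hT)ᗮ) {i : Fin d → ℤ} (hi : 0 ≤ i) :
    g ∘ T i =ᵐ[μ] g := by
  set h := Lp.compMeasurePreserving (T i) (hT i) g
  have hcoe : h =ᵐ[μ] g ∘ T i := Lp.coeFn_compMeasurePreserving g (hT i)
  have hmem : h - g ∈ birkhoffSubmodule hT := by
    refine (hasBirkhoffLimit_comp_sub hadd hT ((Lp.memLp g).integrable one_le_two) hi).congr hT ?_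
    filter_upwards [Lp.coeFn_sub h g, hcoe] with x hsub hx
    rw [hsub, Pi.sub_apply, hx, Function.comp_apply]
  -- `h - g ⊥ g` and `‖h‖ = ‖g‖` force `h = g`.
  have hinner : inner ℝ h g = ‖g‖ ^ 2 := by
    rw [← real_inner_self_eq_norm_sq, ← sub_eq_zero, ← inner_sub_left]
    exact Submodule.inner_right_of_mem_orthogonal hmem hg
  have hnorm : ‖h‖ = ‖g‖ := Lp.norm_compMeasurePreserving g (hT i)
  have hsq : ‖h - g‖ ^ 2 = 0 := by
    rw [norm_sub_sq_real, hinner, hnorm]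
    ring
  rw [sub_eq_zero.1 (norm_eq_zero.1 (pow_eq_zero_iff two_ne_zero |>.1 hsq))] at hcoe
  exact hcoe.symm

lemma orthogonal_birkhoffSubmodule [IsProbabilityMeasure μ]
    (hadd : ∀ i j, T (i + j) = T i ∘ T j) (hT : ∀ j, MeasurePreserving (T j) μ μ)
    (herg : ∀ A, MeasurableSet A → (∀ j, T j ⁻¹' A = A) → μ A = 0 ∨ μ A = 1) :
    (birkhoffSubmodule hT)ᗮ = ⊥ := by
  refine (Submodule.eq_bot_iff _).2 fun g hg ↦ ?_
  obtain ⟨c, hc⟩ := exists_ae_eq_const_of_comp_ae_eq hadd hT herg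
    (Lp.aestronglyMeasurable g).aemeasurable.nullMeasurable fun i hi ↦
      comp_ae_eq_of_mem_orthogonal_birkhoffSubmodule hadd hT hg hi
  have hmem : g ∈ birkhoffSubmodule hT := (hasBirkhoffLimit_const c).congr hT hc.symm
  exact inner_self_eq_zero.1 (Submodule.inner_right_of_mem_orthogonal hmem hg)

lemma hasBirkhoffLimit_of_memLp_two [IsProbabilityMeasure μ]
    (hadd : ∀ i j, T (i + j) = T i ∘ T j) (hT : ∀ j, MeasurePreserving (T j) μ μ)
    (herg : ∀ A, MeasurableSet A → (∀ j, T j ⁻¹' A = A) → μ A = 0 ∨ μ A = 1)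
    {u : X → ℝ} (hu : MemLp u 2 μ) : HasBirkhoffLimit T μ u := by
  have hdense := Submodule.topologicalClosure_eq_top_iff.2
    (orthogonal_birkhoffSubmodule hadd hT herg)
  have hclosure : hu.toLp u ∈ closure (birkhoffSubmodule hT : Set (Lp ℝ 2 μ)) := by
    rw [← Submodule.topologicalClosure_coe, hdense]
    trivial
  refine hasBirkhoffLimit_of_forall_exists hadd hT (hu.integrable one_le_two) fun ε hε ↦ ?_
  obtain ⟨v, hv, huv⟩ := EMetric.mem_closure_iff.1 hclosure ε (pos_iff_ne_zero.2 hε)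
  refine ⟨v, (Lp.memLp v).integrable one_le_two, hv, ?_⟩
  rw [Lp.edist_def, eLpNorm_congr_ae (hu.coeFn_toLp.sub (ae_eq_refl v))] at huv
  exact (eLpNorm_le_eLpNorm_of_exponent_le one_le_two (hu.1.sub (Lp.aestronglyMeasurable v))).trans
    huv.le

theorem hasBirkhoffLimit_of_integrable [IsProbabilityMeasure μ]
    (hadd : ∀ i j, T (i + j) = T i ∘ T j) (hT : ∀ j, MeasurePreserving (T j) μ μ)
    (herg : ∀ A, MeasurableSet A → (∀ j, T j ⁻¹' A = A) → μ A = 0 ∨ μ A = 1)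
    {u : X → ℝ} (hu : Integrable u μ) : HasBirkhoffLimit T μ u := by
  refine hasBirkhoffLimit_of_forall_exists hadd hT hu fun ε hε ↦ ?_
  obtain ⟨s, hs, hsi⟩ := (memLp_one_iff_integrable.2 hu).exists_simpleFunc_eLpNorm_sub_lt
    ENNReal.one_ne_top hε
  obtain ⟨C, hC⟩ := s.exists_forall_norm_le
  exact ⟨s, memLp_one_iff_integrable.1 hsi, hasBirkhoffLimit_of_memLp_two hadd hT herg
    (.of_bound s.aestronglyMeasurable C (ae_of_all _ hC)), hs.le⟩

end ErgodicTheorem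

section BoxDist

variable {d : ℕ} {T : (Fin d → ℤ) → X → X} {f : X → ℂ} {x y z : X}

/-- The quantity `((1/|F_n|) Σ_{j∈F_n} |f(T^j x) − f(T^j y)|²)^{1/2}` whose upper limit is
`d_f(x,y)`. -/
def boxDist (T : (Fin d → ℤ) → X → X) (f : X → ℂ) (n : ℕ) (x y : X) : ℝ :=
  √(𝔼 j ∈ Fbox d n, ‖f (T j x) - f (T j y)‖ ^ 2)

/-- The averages of `|f|²` along the orbit of `x` stay bounded. On such points `d_f` is a genuine
pseudometric: no upper limit of an unbounded sequence, whose value would be junk, is involved. -/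
def HasBddSqMeans (T : (Fin d → ℤ) → X → X) (f : X → ℂ) (x : X) : Prop :=
  IsBoundedUnder (· ≤ ·) atTop fun n ↦ 𝔼 j ∈ Fbox d n, ‖f (T j x)‖ ^ 2

lemma dF_eq_limsup_boxDist : dF T f x y = limsup (fun n ↦ boxDist T f n x y) atTop := by
  simp only [dF, boxDist, expect_eq_sum_div_card]

lemma genericSq.hasBddSqMeans [MeasurableSpace X] {μ : Measure X} (hx : genericSq μ T f x) :
    HasBddSqMeans T f x := by
  unfold HasBddSqMeans
  simp only [expect_eq_sum_div_card]
  exact Tendsto.isBoundedUnder_le hx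

lemma boxDist_nonneg (n : ℕ) : 0 ≤ boxDist T f n x y := Real.sqrt_nonneg _

lemma boxDist_sq (n : ℕ) :
    boxDist T f n x y ^ 2 = 𝔼 j ∈ Fbox d n, ‖f (T j x) - f (T j y)‖ ^ 2 :=
  Real.sq_sqrt (expect_nonneg fun _ _ ↦ sq_nonneg _)

lemma boxDist_triangle (n : ℕ) : boxDist T f n x z ≤ boxDist T f n x y + boxDist T f n y z := by
  let orbit (x : X) : EuclideanSpace ℂ (Fbox d n) := WithLp.toLp 2 fun j ↦ f (T j x)
  have hnorm (x y : X) : boxDist T f n x y = ‖orbit x - orbit y‖ / √(#(Fbox d n)) := by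
    rw [EuclideanSpace.norm_eq, ← Real.sqrt_div' _ (Nat.cast_nonneg _), boxDist,
      expect_eq_sum_div_card, ← sum_coe_sort]
    rfl
  rw [hnorm, hnorm, hnorm, ← add_div]
  gcongr
  exact norm_sub_le_norm_sub_add_norm_sub _ _ _

lemma sq_norm_sub_le {E : Type*} [SeminormedAddCommGroup E] (a b : E) :
    ‖a - b‖ ^ 2 ≤ 2 * (‖a‖ ^ 2 + ‖b‖ ^ 2) :=
  (pow_le_pow_left₀ (norm_nonneg _) (norm_sub_le a b) 2).trans add_sq_le

lemma isBoundedUnder_boxDist (hx : HasBddSqMeans T f x) (hy : HasBddSqMeans T f y) :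
    IsBoundedUnder (· ≤ ·) atTop fun n ↦ boxDist T f n x y := by
  obtain ⟨a, ha⟩ := hx
  obtain ⟨b, hb⟩ := hy
  refine ⟨√(2 * (a + b)), ?_⟩
  rw [eventually_map] at ha hb ⊢
  filter_upwards [ha, hb] with n han hbn
  refine Real.sqrt_le_sqrt ?_
  calc _ ≤ 𝔼 j ∈ Fbox d n, 2 * (‖f (T j x)‖ ^ 2 + ‖f (T j y)‖ ^ 2) :=
        expect_le_expect fun _ _ ↦ sq_norm_sub_le _ _
    _ = 2 * (𝔼 j ∈ Fbox d n, ‖f (T j x)‖ ^ 2 + 𝔼 j ∈ Fbox d n, ‖f (T j y)‖ ^ 2) := by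
        rw [← mul_expect, expect_add_distrib]
    _ ≤ 2 * (a + b) := by gcongr

lemma dF_le_of_eventually_boxDist_le {a : ℝ} (h : ∀ᶠ n in atTop, boxDist T f n x y ≤ a) :
    dF T f x y ≤ a := by
  rw [dF_eq_limsup_boxDist]
  exact limsup_le_of_le (isCoboundedUnder_le_of_le atTop boxDist_nonneg) h

lemma eventually_boxDist_lt_of_dF_lt (hx : HasBddSqMeans T f x) (hy : HasBddSqMeans T f y) {a : ℝ}
    (h : dF T f x y < a) : ∀ᶠ n in atTop, boxDist T f n x y < a := by
  rw [dF_eq_limsup_boxDist] at h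
  exact eventually_lt_of_limsup_lt h (isBoundedUnder_boxDist hx hy)

lemma dF_comm (x y : X) : dF T f x y = dF T f y x := by
  simp only [dF, norm_sub_rev]

lemma dF_triangle (hx : HasBddSqMeans T f x) (hy : HasBddSqMeans T f y)
    (hz : HasBddSqMeans T f z) : dF T f x z ≤ dF T f x y + dF T f y z := by
  refine le_of_forall_pos_le_add fun ε hε ↦ dF_le_of_eventually_boxDist_le ?_
  filter_upwards [eventually_boxDist_lt_of_dF_lt hx hy (lt_add_of_pos_right _ (half_pos hε)),
    eventually_boxDist_lt_of_dF_lt hy hz (lt_add_of_pos_right _ (half_pos hε))] with n hxy hyz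
  have htriangle := boxDist_triangle (T := T) (f := f) (x := x) (y := y) (z := z) n
  linarith

lemma boxDist_shift_le (hadd : ∀ i j, T (i + j) = T i ∘ T j) {i : Fin d → ℤ} {n K : ℕ}
    (hn : n ≠ 0) (hK : boxAt i n ⊆ Fbox d (n + K)) :
    boxDist T f n (T i x) (T i y) ≤
      √((#(Fbox d (n + K)) : ℝ) / #(Fbox d n)) * boxDist T f (n + K) x y := by
  have hcard : (#(Fbox d (n + K)) : ℝ) ≠ 0 := by
    exact_mod_cast (card_pos.2 (Fbox_nonempty (by omega))).ne'
  rw [boxDist, boxDist, ← Real.sqrt_mul (by positivity)]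
  refine Real.sqrt_le_sqrt ?_
  rw [expect_eq_sum_div_card, expect_eq_sum_div_card, div_mul_eq_mul_div, mul_div_cancel₀ _ hcard]
  gcongr
  calc ∑ j ∈ Fbox d n, ‖f (T j (T i x)) - f (T j (T i y))‖ ^ 2
      = ∑ j ∈ boxAt i n, ‖f (T j x) - f (T j y)‖ ^ 2 := by
        simp only [sum_boxAt, hadd, Function.comp_apply]
    _ ≤ _ := sum_le_sum_of_subset_of_nonneg hK fun _ _ _ ↦ sq_nonneg _

lemma dF_shift_le (hadd : ∀ i j, T (i + j) = T i ∘ T j) (hx : HasBddSqMeans T f x)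
    (hy : HasBddSqMeans T f y) {i : Fin d → ℤ} (hi : 0 ≤ i) :
    dF T f (T i x) (T i y) ≤ dF T f x y := by
  obtain ⟨K, hK⟩ := exists_boxAt_subset_Fbox hi
  refine le_of_forall_gt_imp_ge_of_dense fun a ha ↦ dF_le_of_eventually_boxDist_le ?_
  obtain ⟨b, hb, hba⟩ := exists_between ha
  have hratio : Tendsto (fun n ↦ √((#(Fbox d (n + K)) : ℝ) / #(Fbox d n)) * b) atTop
      (nhds b) := by
    simpa using (tendsto_card_Fbox_add_div d K).sqrt.mul_const b
  filter_upwards [hratio.eventually_le_const hba, eventually_ne_atTop 0,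
    (tendsto_add_atTop_nat K).eventually (eventually_boxDist_lt_of_dF_lt hx hy hb)]
    with n hna hn hnb
  calc _ ≤ _ := boxDist_shift_le hadd hn (hK n)
    _ ≤ _ := by gcongr
    _ ≤ a := hna

lemma ae_genericSq [MeasurableSpace X] {μ : Measure X} [IsProbabilityMeasure μ]
    (hadd : ∀ i j, T (i + j) = T i ∘ T j) (hT : ∀ j, MeasurePreserving (T j) μ μ)
    (herg : ∀ A, MeasurableSet A → (∀ j, T j ⁻¹' A = A) → μ A = 0 ∨ μ A = 1)
    (hf : MemLp f 2 μ) : ∀ᵐ x ∂μ, genericSq μ T f x := by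
  have hlim := hasBirkhoffLimit_of_integrable hadd hT herg (hf.integrable_norm_pow two_ne_zero)
  simpa only [HasBirkhoffLimit, genericSq, expect_eq_sum_div_card] using hlim

end BoxDist

section RhoF

variable {d : ℕ} {T : (Fin d → ℤ) → X → X} {f : X → ℂ} {x y : X}

lemma upperDensity_eq_limsup_expect (S : Set (Fin d → ℤ)) :
    upperDensity d S = limsup (fun n ↦ 𝔼 j ∈ Fbox d n, (S.indicator 1 j : ℝ)) atTop := by
  simp only [upperDensity, expect_eq_sum_div_card, Set.indicator_apply, Pi.one_apply, sum_boole]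

lemma upperDensity_le_of_eventually_le {S : Set (Fin d → ℤ)} {a : ℝ}
    (h : ∀ᶠ n in atTop, 𝔼 j ∈ Fbox d n, (S.indicator 1 j : ℝ) ≤ a) :
    upperDensity d S ≤ a := by
  rw [upperDensity_eq_limsup_expect]
  refine limsup_le_of_le (isCoboundedUnder_le_of_le (x := 0) atTop fun n ↦ ?_) h
  exact expect_nonneg fun j _ ↦ Set.indicator_nonneg (fun _ _ ↦ zero_le_one) j

lemma expect_indicator_one_le_one (S : Set (Fin d → ℤ)) (n : ℕ) :
    𝔼 j ∈ Fbox d n, (S.indicator 1 j : ℝ) ≤ 1 := by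
  rw [expect_eq_sum_div_card]
  refine div_le_one_of_le₀ ?_ (Nat.cast_nonneg _)
  simpa using sum_le_card_nsmul (Fbox d n) _ 1 fun j _ ↦
    Set.indicator_le_self' (f := (1 : (Fin d → ℤ) → ℝ)) (s := S) (fun _ _ ↦ zero_le_one) j

lemma eventually_lt_of_upperDensity_lt {S : Set (Fin d → ℤ)} {a : ℝ}
    (h : upperDensity d S < a) :
    ∀ᶠ n in atTop, 𝔼 j ∈ Fbox d n, (S.indicator 1 j : ℝ) < a := by
  rw [upperDensity_eq_limsup_expect] at h
  exact eventually_lt_of_limsup_lt h (isBoundedUnder_of ⟨1, expect_indicator_one_le_one S⟩)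

lemma rhoF_le_of_dF_lt (hx : HasBddSqMeans T f x) (hy : HasBddSqMeans T f y) {a ε : ℝ}
    (hε : 0 < ε) (h : dF T f x y < a) (haε : a ^ 2 < ε ^ 3) : rhoF T f x y ≤ ε := by
  refine csInf_le ⟨0, fun e he ↦ he.1.le⟩ ⟨hε, ?_⟩
  have ha : a ^ 2 / ε ^ 2 < ε := by
    rwa [div_lt_iff₀ (by positivity), ← pow_succ']
  refine (upperDensity_le_of_eventually_le ?_).trans_lt ha
  filter_upwards [eventually_boxDist_lt_of_dF_lt hx hy h] with n hn
  have hmarkov (j : Fin d → ℤ) : ε ^ 2 * Set.indicator {i | ε < ‖f (T i x) - f (T i y)‖} 1 j ≤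
      ‖f (T j x) - f (T j y)‖ ^ 2 := by
    by_cases hj : ε < ‖f (T j x) - f (T j y)‖
    · simpa [hj] using pow_le_pow_left₀ hε.le hj.le 2
    · simp [hj]
  rw [le_div_iff₀' (by positivity), mul_expect]
  calc _ ≤ boxDist T f n x y ^ 2 := by
        rw [boxDist_sq]
        exact expect_le_expect fun j _ ↦ hmarkov j
    _ ≤ a ^ 2 := pow_le_pow_left₀ (boxDist_nonneg n) hn.le 2

/-- The part of `|f|²` above the level `K`. -/
def sqTail (f : X → ℂ) (K : ℕ) (x : X) : ℝ := max (‖f x‖ ^ 2 - K) 0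

lemma integrable_sqTail [MeasurableSpace X] {μ : Measure X} [IsFiniteMeasure μ]
    (hf : MemLp f 2 μ) (K : ℕ) : Integrable (sqTail f K) μ :=
  ((hf.integrable_norm_pow two_ne_zero).sub (integrable_const _)).pos_part

lemma tendsto_integral_sqTail [MeasurableSpace X] {μ : Measure X} [IsFiniteMeasure μ]
    (hf : MemLp f 2 μ) : Tendsto (fun K ↦ ∫ x, sqTail f K x ∂μ) atTop (nhds 0) := by
  rw [← integral_zero X ℝ (μ := μ)]
  refine tendsto_integral_of_dominated_convergence _
    (fun K ↦ (integrable_sqTail hf K).aestronglyMeasurable) (hf.integrable_norm_pow two_ne_zero)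
    (fun K ↦ ae_of_all _ fun x ↦ ?_) (ae_of_all _ fun x ↦ tendsto_const_nhds.congr' ?_)
  · rw [sqTail, Real.norm_of_nonneg (le_max_right _ _)]
    exact max_le (sub_le_self _ (Nat.cast_nonneg _)) (sq_nonneg _)
  · filter_upwards [eventually_ge_atTop ⌈‖f x‖ ^ 2⌉₊] with K hK
    rw [sqTail, max_eq_right (sub_nonpos.2 (Nat.ceil_le.1 hK))]

lemma sq_norm_sub_le_add_sqTail {S : Set (Fin d → ℤ)} {e : ℝ} {j : Fin d → ℤ}
    (hj : j ∉ S → ‖f (T j x) - f (T j y)‖ ≤ e) (K : ℕ) :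
    ‖f (T j x) - f (T j y)‖ ^ 2 ≤
      e ^ 2 + 4 * K * S.indicator 1 j + 2 * (sqTail f K (T j x) + sqTail f K (T j y)) := by
  have hle (z : X) : ‖f z‖ ^ 2 ≤ K + sqTail f K z := sub_le_iff_le_add'.1 (le_max_left _ _)
  have hnonneg (z : X) : 0 ≤ sqTail f K z := le_max_right _ _
  by_cases hS : j ∈ S
  · rw [Set.indicator_of_mem hS, Pi.one_apply]
    linarith [sq_norm_sub_le (f (T j x)) (f (T j y)), hle (T j x), hle (T j y), sq_nonneg e]
  · rw [Set.indicator_of_notMem hS]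
    linarith [pow_le_pow_left₀ (norm_nonneg _) (hj hS) 2, hnonneg (T j x), hnonneg (T j y)]

lemma boxDist_sq_le (e : ℝ) (K : ℕ) {n : ℕ} (hn : n ≠ 0) :
    boxDist T f n x y ^ 2 ≤ e ^ 2 +
      4 * K * 𝔼 j ∈ Fbox d n, Set.indicator {i | e < ‖f (T i x) - f (T i y)‖} 1 j +
      2 * (𝔼 j ∈ Fbox d n, sqTail f K (T j x) + 𝔼 j ∈ Fbox d n, sqTail f K (T j y)) := by
  rw [boxDist_sq, ← expect_const (Fbox_nonempty (d := d) hn) (e ^ 2), mul_expect,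
    ← expect_add_distrib, ← expect_add_distrib, mul_expect, ← expect_add_distrib]
  exact expect_le_expect fun j _ ↦
    sq_norm_sub_le_add_sqTail (fun hj : ¬ e < _ ↦ not_lt.1 hj) K

lemma exists_upperDensity_lt_of_rhoF_lt {a : ℝ} (h : rhoF T f x y < a) :
    ∃ e, 0 < e ∧ e < a ∧ upperDensity d {i | e < ‖f (T i x) - f (T i y)‖} < e := by
  have hne : {ε : ℝ | 0 < ε ∧ upperDensity d {i | ε < ‖f (T i x) - f (T i y)‖} < ε}.Nonempty :=
    ⟨2, two_pos, (upperDensity_le_of_eventually_le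
      (.of_forall (expect_indicator_one_le_one _))).trans_lt one_lt_two⟩
  obtain ⟨e, ⟨he, hdensity⟩, hea⟩ := exists_lt_of_csInf_lt hne h
  exact ⟨e, he, hea, hdensity⟩

/-- Outside the sparse set of indices where `f(T^j x)` and `f(T^j y)` are far apart the square is at
most `e²`; on that set it is at most `4K` up to the tails, whose averages are small. -/
lemma exists_dF_le_of_rhoF_le [MeasurableSpace X] {μ : Measure X} {ε : ℝ} (hε : 0 < ε) {K : ℕ}
    (hK : ∫ x, sqTail f K x ∂μ < ε ^ 2 / 8) :
    ∃ η > 0, ∀ x y,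
      Tendsto (fun n ↦ 𝔼 j ∈ Fbox d n, sqTail f K (T j x)) atTop
        (nhds (∫ x, sqTail f K x ∂μ)) →
      Tendsto (fun n ↦ 𝔼 j ∈ Fbox d n, sqTail f K (T j y)) atTop
        (nhds (∫ x, sqTail f K x ∂μ)) →
      rhoF T f x y ≤ η → dF T f x y ≤ ε := by
  have hsmall : ∀ᶠ a : ℝ in nhdsWithin 0 (Set.Ioi 0), a ^ 2 + 4 * K * a < ε ^ 2 / 2 := by
    refine Tendsto.eventually_lt_const (v := 0) (by positivity)
      (tendsto_nhdsWithin_of_tendsto_nhds ?_)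
    exact Continuous.tendsto' (by fun_prop) _ _ (by simp)
  obtain ⟨a, haε, ha : 0 < a⟩ := (hsmall.and self_mem_nhdsWithin).exists
  refine ⟨a / 2, half_pos ha, fun x y hx hy hρ ↦ dF_le_of_eventually_boxDist_le ?_⟩
  obtain ⟨e, he, hea, hdensity⟩ :=
    exists_upperDensity_lt_of_rhoF_lt (hρ.trans_lt (half_lt_self ha))
  filter_upwards [eventually_lt_of_upperDensity_lt hdensity, hx.eventually_lt_const hK,
    hy.eventually_lt_const hK, eventually_ne_atTop 0] with n hne hnx hny hn
  refine le_of_sq_le_sq ?_ hε.le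
  calc _ ≤ _ := boxDist_sq_le e K hn
    _ ≤ a ^ 2 + 4 * K * a + 2 * (ε ^ 2 / 8 + ε ^ 2 / 8) := by
        gcongr
        exact hne.le.trans hea.le
    _ ≤ ε ^ 2 := by linarith

end RhoF

section NullMeasurable

variable {α β : Type*} [MeasurableSpace α] [MeasurableSpace β] {μ : Measure α} {ν : Measure β}

lemma aemeasurable_limsup {u : ℕ → α → ℝ} (hu : ∀ n, AEMeasurable (u n) μ) :
    AEMeasurable (fun a ↦ limsup (fun n ↦ u n a) atTop) μ := by
  refine ⟨_, Measurable.limsup fun n ↦ (hu n).measurable_mk, ?_⟩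
  filter_upwards [ae_all_iff.2 fun n ↦ (hu n).ae_eq_mk] with a ha
  simp only [ha]

lemma aemeasurable_dF {d : ℕ} {T : (Fin d → ℤ) → X → X} {f : X → ℂ} {u v : α → X}
    (hu : ∀ j, AEMeasurable (fun a ↦ f (T j (u a))) μ)
    (hv : ∀ j, AEMeasurable (fun a ↦ f (T j (v a))) μ) :
    AEMeasurable (fun a ↦ dF T f (u a) (v a)) μ :=
  aemeasurable_limsup fun _ ↦ ((Finset.aemeasurable_fun_sum _ fun j _ ↦
    ((hu j).sub (hv j)).norm.pow_const 2).div_const _).sqrt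

lemma measure_prodMk_left_ae_eq [SFinite ν] {s t : Set (α × β)} (h : s =ᵐ[μ.prod ν] t) :
    (fun a ↦ ν (Prod.mk a ⁻¹' s)) =ᵐ[μ] fun a ↦ ν (Prod.mk a ⁻¹' t) := by
  filter_upwards [Measure.ae_ae_of_ae_prod h] with a ha
  exact measure_congr ha

lemma aemeasurable_measure_prodMk_left [SFinite ν] {s : Set (α × β)}
    (hs : NullMeasurableSet s (μ.prod ν)) : AEMeasurable (fun a ↦ ν (Prod.mk a ⁻¹' s)) μ := by
  obtain ⟨t, ht, hst⟩ := hs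
  exact ⟨_, measurable_measure_prodMk_left ht, measure_prodMk_left_ae_eq hst⟩

lemma measure_prod_eq_zero_iff [SFinite ν] {s : Set (α × β)}
    (hs : NullMeasurableSet s (μ.prod ν)) :
    μ.prod ν s = 0 ↔ ∀ᵐ a ∂μ, ν (Prod.mk a ⁻¹' s) = 0 := by
  obtain ⟨t, ht, hst⟩ := hs
  rw [measure_congr hst, Measure.measure_prod_null ht]
  exact (measure_prodMk_left_ae_eq hst).symm.congr_left

end NullMeasurable

section Balls

variable {d : ℕ} {T : (Fin d → ℤ) → X → X} {f : X → ℂ} [MeasurableSpace X] {μ : Measure X}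

lemma nullMeasurableSet_dF_le (hT : ∀ j, MeasurePreserving (T j) μ μ) (hf : AEMeasurable f μ)
    (x : X) (ε : ℝ) : NullMeasurableSet {y | dF T f x y ≤ ε} μ :=
  nullMeasurableSet_le (aemeasurable_dF (fun _ ↦ aemeasurable_const)
    fun j ↦ hf.comp_quasiMeasurePreserving (hT j).quasiMeasurePreserving) aemeasurable_const

lemma nullMeasurableSet_prod_dF_le [SFinite μ] (hT : ∀ j, MeasurePreserving (T j) μ μ)
    (hf : AEMeasurable f μ) (ε : ℝ) :
    NullMeasurableSet {p : X × X | dF T f p.1 p.2 ≤ ε} (μ.prod μ) := by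
  have hfT (j : Fin d → ℤ) : AEMeasurable (f ∘ T j) μ :=
    hf.comp_quasiMeasurePreserving (hT j).quasiMeasurePreserving
  exact nullMeasurableSet_le (aemeasurable_dF
    (fun j ↦ (hfT j).comp_quasiMeasurePreserving Measure.quasiMeasurePreserving_fst)
    fun j ↦ (hfT j).comp_quasiMeasurePreserving Measure.quasiMeasurePreserving_snd)
    aemeasurable_const

lemma measure_dF_le_le_comp (hadd : ∀ i j, T (i + j) = T i ∘ T j)
    (hT : ∀ j, MeasurePreserving (T j) μ μ) (hf : AEMeasurable f μ)
    (hbdd : ∀ᵐ x ∂μ, HasBddSqMeans T f x) (ε : ℝ) {x : X} (hx : HasBddSqMeans T f x)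
    {i : Fin d → ℤ} (hi : 0 ≤ i) :
    μ {y | dF T f x y ≤ ε} ≤ μ {y | dF T f (T i x) y ≤ ε} := by
  rw [← (hT i).measure_preimage (nullMeasurableSet_dF_le hT hf (T i x) ε)]
  refine measure_mono_ae ?_
  filter_upwards [hbdd] with y hy hxy
  exact (dF_shift_le hadd hx hy hi).trans hxy

lemma exists_ae_measure_dF_le_eq [IsProbabilityMeasure μ] (hadd : ∀ i j, T (i + j) = T i ∘ T j)
    (hT : ∀ j, MeasurePreserving (T j) μ μ)
    (herg : ∀ A, MeasurableSet A → (∀ j, T j ⁻¹' A = A) → μ A = 0 ∨ μ A = 1)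
    (hf : AEMeasurable f μ) (hbdd : ∀ᵐ x ∂μ, HasBddSqMeans T f x) (ε : ℝ) :
    ∃ c, ∀ᵐ x ∂μ, μ {y | dF T f x y ≤ ε} = c := by
  have hφ : AEMeasurable (fun x ↦ μ {y | dF T f x y ≤ ε}) μ :=
    aemeasurable_measure_prodMk_left (nullMeasurableSet_prod_dF_le hT hf ε)
  have hfin : ∫⁻ x, μ {y | dF T f x y ≤ ε} ∂μ ≠ ⊤ :=
    (((lintegral_mono fun _ ↦ prob_le_one).trans_eq (by simp)).trans_lt ENNReal.one_lt_top).ne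
  refine exists_ae_eq_const_of_comp_ae_eq hadd hT herg hφ.nullMeasurable fun i hi ↦ .symm ?_
  refine ae_eq_of_ae_le_of_lintegral_le ?_ hfin
    (hφ.comp_quasiMeasurePreserving (hT i).quasiMeasurePreserving)
    (lintegral_comp_of_measurePreserving (hT i) hφ).le
  filter_upwards [hbdd] with x hx
  exact measure_dF_le_le_comp hadd hT hf hbdd ε hx hi

/-- Balls of radius `ε` around `2ε`-separated points are disjoint, so only finitely many of them can
have measure at least `c`. -/
lemma exists_finset_dF_le [IsFiniteMeasure μ] (hT : ∀ j, MeasurePreserving (T j) μ μ)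
    (hf : AEMeasurable f μ) (hbdd : ∀ᵐ x ∂μ, HasBddSqMeans T f x) {ε : ℝ} {c : ENNReal}
    (hc : 0 < c) {Y : Set X} (hYbdd : ∀ x ∈ Y, HasBddSqMeans T f x)
    (hY : ∀ x ∈ Y, c ≤ μ {y | dF T f x y ≤ ε}) :
    ∃ s : Finset X, ↑s ⊆ Y ∧ ∀ y ∈ Y, ∃ x ∈ s, dF T f x y ≤ 2 * ε := by
  by_contra! hcover
  have hsymm : Std.Symm fun x y ↦ 2 * ε < dF T f x y := ⟨fun x y h ↦ by rwa [dF_comm]⟩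
  obtain ⟨x, hxY, hsep⟩ := exists_seq_of_forall_finset_exists' (· ∈ Y)
    (fun x y ↦ 2 * ε < dF T f x y) hcover
  have hdisj : Pairwise (Function.onFun (AEDisjoint μ) fun n ↦ {y | dF T f (x n) y ≤ ε}) := by
    intro m n hmn
    refine measure_mono_null (t := {y | ¬HasBddSqMeans T f y})
      (fun y hy hbdd_y ↦ (hsep hmn).not_ge ?_) (ae_iff.1 hbdd)
    have hm : dF T f (x m) y ≤ ε := hy.1
    have hn : dF T f y (x n) ≤ ε := (dF_comm _ _).trans_le hy.2
    linarith [dF_triangle (hYbdd _ (hxY m)) hbdd_y (hYbdd _ (hxY n))]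
  refine Set.infinite_univ (α := ℕ) ((Measure.finite_const_le_meas_of_disjoint_iUnion₀ μ hc
    (fun n ↦ nullMeasurableSet_dF_le hT hf (x n) ε) hdisj (measure_ne_top _ _)).subset ?_)
  exact fun n _ ↦ hY _ (hxY n)

end Balls

section CompactSubsets

variable [MetricSpace X] [MeasurableSpace X] [OpensMeasurableSpace X] {μ : Measure X}

lemma exists_isCompact_measure_sdiff_lt [IsFiniteMeasure μ] [μ.InnerRegularCompactLTTop]
    {A : Set X} (hA : NullMeasurableSet A μ) {τ : ENNReal} (hτ : τ ≠ 0) :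
    ∃ K ⊆ A, IsCompact K ∧ μ (A \ K) < τ := by
  obtain ⟨B, hBA, hB, hBae⟩ := hA.exists_measurable_subset_ae_eq
  obtain ⟨K, hKB, hK, hμK⟩ := hB.exists_isCompact_sdiff_lt (measure_ne_top μ B) hτ
  exact ⟨K, hKB.trans hBA, hK, (measure_congr (ae_eq_set_sdiff hBae.symm .rfl)).trans_lt hμK⟩

/-- Disjoint compact sets lie at positive distance from each other, so it suffices to cut the union
into disjoint pieces, each inside one `C i`, and to approximate every piece from within. -/
lemma exists_isCompact_forall_dist_le_exists_mem [IsFiniteMeasure μ]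
    [μ.InnerRegularCompactLTTop] {ι : Type*} {C : ι → Set X} (s : Finset ι)
    (hC : ∀ i, NullMeasurableSet (C i) μ) {τ : ENNReal} (hτ : τ ≠ 0) :
    ∃ M, IsCompact M ∧ μ ((⋃ i ∈ s, C i) \ M) ≤ τ ∧
      ∃ δ > 0, ∀ x ∈ M, ∀ y ∈ M, dist x y ≤ δ → ∃ i ∈ s, x ∈ C i ∧ y ∈ C i := by
  induction s using Finset.induction_on generalizing τ with
  | empty => exact ⟨∅, isCompact_empty, by simp, 1, one_pos, by simp⟩
  | insert i s _ ih =>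
    have hτ' : τ / 2 ≠ 0 := (ENNReal.half_pos hτ).ne'
    obtain ⟨M, hM, hμM, δ, hδ, hδM⟩ := ih hτ'
    obtain ⟨K, hKC, hK, hμK⟩ := exists_isCompact_measure_sdiff_lt
      ((hC i).diff hM.measurableSet.nullMeasurableSet) hτ'
    obtain ⟨r, hr, hrMK⟩ := exists_pos_forall_lt_edist hM hK.isClosed
      (Set.disjoint_left.2 fun x hxM hxK ↦ (hKC hxK).2 hxM)
    have hfar {x y : X} (hx : x ∈ M) (hy : y ∈ K) : r < dist x y := by
      have hrxy := hrMK x hx y hy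
      rw [edist_nndist] at hrxy
      exact_mod_cast hrxy
    refine ⟨M ∪ K, hM.union hK, ?_, min δ r, lt_min hδ hr, ?_⟩
    · calc μ ((⋃ j ∈ insert i s, C j) \ (M ∪ K))
          ≤ μ (((⋃ j ∈ s, C j) \ M) ∪ ((C i \ M) \ K)) := by
            refine measure_mono fun x ↦ ?_
            simp only [Finset.set_biUnion_insert, Set.mem_sdiff, Set.mem_union]
            tauto
        _ ≤ τ / 2 + τ / 2 := (measure_union_le _ _).trans (add_le_add hμM hμK.le)
        _ = τ := ENNReal.add_halves τ
    · rintro x (hx | hx) y (hy | hy) hxy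
      · obtain ⟨j, hj, hxyj⟩ := hδM x hx y hy (hxy.trans (min_le_left _ _))
        exact ⟨j, mem_insert_of_mem hj, hxyj⟩
      · exact absurd (hxy.trans (min_le_right _ _)) (hfar hx hy).not_ge
      · exact absurd (hxy.trans (min_le_right _ _)) (dist_comm x y ▸ (hfar hy hx).not_ge)
      · exact ⟨i, mem_insert_self i s, (hKC hx).1, (hKC hy).1⟩

lemma exists_measure_inter_ball_ne_zero {A M : Set X} (hM : IsCompact M) (hAM : A ⊆ M)
    (hA : μ A ≠ 0) {r : ℝ} (hr : 0 < r) : ∃ x, μ (A ∩ ball x r) ≠ 0 := by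
  by_contra! hzero
  have hnull : μ.restrict A M = 0 := hM.measure_zero_of_nhdsWithin fun x _ ↦
    ⟨ball x r, mem_nhdsWithin_of_mem_nhds (ball_mem_nhds x hr), by
      rw [Measure.restrict_apply measurableSet_ball, Set.inter_comm, hzero]⟩
  rw [Measure.restrict_apply hM.measurableSet, Set.inter_eq_right.2 hAM] at hnull
  exact hA hnull

end CompactSubsets

section Equicontinuity

variable {d : ℕ} {T : (Fin d → ℤ) → X → X} {f : X → ℂ} [MetricSpace X] [MeasurableSpace X]
  [OpensMeasurableSpace X] {μ : Measure X} [IsProbabilityMeasure μ]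

lemma muFMeanEquicont_of_forall_exists_isCompact
    (h : ∀ ε : ℝ, 0 < ε → ∀ τ : ENNReal, τ ≠ 0 → ∃ M, IsCompact M ∧ μ Mᶜ ≤ τ ∧
      ∃ δ > 0, ∀ x ∈ M, ∀ y ∈ M, dist x y ≤ δ → rhoF T f x y ≤ ε) :
    MuFMeanEquicont μ T f := by
  intro τ hτ
  obtain ⟨τ', hτ'pos, hτ'sum⟩ :=
    ENNReal.exists_pos_sum_of_countable (ENNReal.ofReal_pos.2 hτ).ne' ℕ
  choose M hM hμM δ hδ hδM using fun m : ℕ ↦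
    h (1 / (m + 1)) (by positivity) (τ' m) (ENNReal.coe_pos.2 (hτ'pos m)).ne'
  have hmeas : MeasurableSet (⋂ m, M m) := .iInter fun m ↦ (hM m).measurableSet
  refine ⟨⋂ m, M m, (hM 0).of_isClosed_subset (isClosed_iInter fun m ↦ (hM m).isClosed)
    (Set.iInter_subset _ 0), ?_, fun ε hε ↦ ?_⟩
  · rw [tsub_le_iff_right, ← prob_add_prob_compl hmeas (μ := μ), Set.compl_iInter]
    gcongr
    calc μ (⋃ m, (M m)ᶜ) ≤ ∑' m, μ (M m)ᶜ := measure_iUnion_le _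
      _ ≤ ∑' m, (τ' m : ENNReal) := ENNReal.tsum_le_tsum hμM
      _ ≤ ENNReal.ofReal τ := hτ'sum.le
  · obtain ⟨m, hm⟩ := exists_nat_one_div_lt hε
    exact ⟨δ m, hδ m, fun x hx y hy hxy ↦
      (hδM m x (Set.mem_iInter.1 hx m) y (Set.mem_iInter.1 hy m) hxy).trans hm.le⟩

lemma exists_isCompact_forall_dF_le [μ.InnerRegularCompactLTTop]
    (hT : ∀ j, MeasurePreserving (T j) μ μ) (hf : AEMeasurable f μ)
    (hbdd : ∀ᵐ x ∂μ, HasBddSqMeans T f x) {ε : ℝ} {c : ENNReal} (hc : 0 < c)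
    (hball : ∀ᵐ x ∂μ, c ≤ μ {y | dF T f x y ≤ ε}) {τ : ENNReal} (hτ : τ ≠ 0) :
    ∃ M, IsCompact M ∧ μ Mᶜ ≤ τ ∧ ∃ δ > 0, ∀ x ∈ M, ∀ y ∈ M, dist x y ≤ δ →
      HasBddSqMeans T f x ∧ HasBddSqMeans T f y ∧ dF T f x y ≤ 4 * ε := by
  let Y : Set X := {x | HasBddSqMeans T f x ∧ c ≤ μ {y | dF T f x y ≤ ε}}
  let C (x : X) : Set X := {y | HasBddSqMeans T f y ∧ dF T f x y ≤ 2 * ε}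
  have hC (x : X) : NullMeasurableSet (C x) μ :=
    (nullMeasurableSet_dF_le hT hf x (2 * ε)).congr
      (hbdd.mono fun y hy ↦ propext (and_iff_right hy).symm)
  obtain ⟨s, hsY, hs⟩ := exists_finset_dF_le hT hf hbdd hc (Y := Y)
    (fun x hx ↦ hx.1) (fun x hx ↦ hx.2)
  obtain ⟨M, hM, hμM, δ, hδ, hδM⟩ := exists_isCompact_forall_dist_le_exists_mem s hC hτ
  refine ⟨M, hM, ?_, δ, hδ, fun x hx y hy hxy ↦ ?_⟩
  · refine (measure_mono_ae ?_).trans hμM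
    filter_upwards [hbdd, hball] with y hy hcy hyM
    obtain ⟨x, hx, hxy⟩ := hs y ⟨hy, hcy⟩
    exact ⟨Set.mem_biUnion hx ⟨hy, hxy⟩, hyM⟩
  · obtain ⟨z, hz, ⟨hxbdd, hzx⟩, hybdd, hzy⟩ := hδM x hx y hy hxy
    refine ⟨hxbdd, hybdd, ?_⟩
    rw [dF_comm] at hzx
    linarith [dF_triangle hxbdd (hsY hz).1 hybdd]

lemma muFMeanEquicont_of_forall_frequently_measure_ne_zero [μ.InnerRegularCompactLTTop]
    (hadd : ∀ i j, T (i + j) = T i ∘ T j) (hT : ∀ j, MeasurePreserving (T j) μ μ)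
    (herg : ∀ A, MeasurableSet A → (∀ j, T j ⁻¹' A = A) → μ A = 0 ∨ μ A = 1)
    (hf : MemLp f 2 μ) (h : ∀ ε : ℝ, 0 < ε → ∃ᵐ x ∂μ, μ {y | dF T f x y ≤ ε} ≠ 0) :
    MuFMeanEquicont μ T f := by
  have hfm : AEMeasurable f μ := hf.aestronglyMeasurable.aemeasurable
  have hbdd : ∀ᵐ x ∂μ, HasBddSqMeans T f x :=
    (ae_genericSq hadd hT herg hf).mono fun x hx ↦ hx.hasBddSqMeans
  refine muFMeanEquicont_of_forall_exists_isCompact fun ε hε τ hτ ↦ ?_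
  obtain ⟨a, ha, haε⟩ : ∃ a : ℝ, 0 < a ∧ a ^ 2 < ε ^ 3 :=
    ⟨√(ε ^ 3 / 2), by positivity, by
      rw [Real.sq_sqrt (by positivity)]; exact half_lt_self (by positivity)⟩
  obtain ⟨c, hc⟩ := exists_ae_measure_dF_le_eq hadd hT herg hfm hbdd (a / 8)
  obtain ⟨x, hx, hxc⟩ := ((h (a / 8) (by positivity)).and_eventually hc).exists
  obtain ⟨M, hM, hμM, δ, hδ, hδM⟩ := exists_isCompact_forall_dF_le hT hfm hbdd
    (pos_iff_ne_zero.2 (hxc ▸ hx)) (hc.mono fun x hx ↦ hx.ge) hτ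
  refine ⟨M, hM, hμM, δ, hδ, fun x hx y hy hxy ↦ ?_⟩
  obtain ⟨hxbdd, hybdd, hdF⟩ := hδM x hx y hy hxy
  exact rhoF_le_of_dF_lt hxbdd hybdd hε (hdF.trans_lt (by linarith)) haε

lemma MeanSensitiveFun.not_muFMeanEquicont (hadd : ∀ i j, T (i + j) = T i ∘ T j)
    (hT : ∀ j, MeasurePreserving (T j) μ μ)
    (herg : ∀ A, MeasurableSet A → (∀ j, T j ⁻¹' A = A) → μ A = 0 ∨ μ A = 1)
    (hf : MemLp f 2 μ) (hsens : MeanSensitiveFun μ T f) : ¬MuFMeanEquicont μ T f := by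
  intro hequi
  obtain ⟨ε, hε, hsens⟩ := hsens
  obtain ⟨K, hK⟩ := ((tendsto_integral_sqTail hf).eventually_lt_const
    (show 0 < ε ^ 2 / 8 by positivity)).exists
  obtain ⟨η, hη, hdF⟩ := exists_dF_le_of_rhoF_le (T := T) hε hK
  obtain ⟨G, hG, hGmeas, hGlim⟩ := Eventually.exists_measurable_mem
    (hasBirkhoffLimit_of_integrable hadd hT herg (integrable_sqTail hf K))
  obtain ⟨M, hM, hμM, hMequi⟩ := hequi (1 / 2) one_half_pos
  obtain ⟨δ, hδ, hδM⟩ := hMequi η hη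
  have hpos : μ (M ∩ G) ≠ 0 := by
    rw [measure_inter_conull (mem_ae_iff.1 hG), ← pos_iff_ne_zero]
    refine hμM.trans_lt' ?_
    rw [tsub_pos_iff_lt, ENNReal.ofReal_lt_one]
    norm_num
  obtain ⟨z, hz⟩ := exists_measure_inter_ball_ne_zero hM Set.inter_subset_left hpos (half_pos hδ)
  obtain ⟨x, ⟨⟨hxM, hxG⟩, hxz⟩, y, ⟨⟨hyM, hyG⟩, hyz⟩, -, -, hxy⟩ := hsens _
    ((hM.measurableSet.inter hGmeas).inter measurableSet_ball) (pos_iff_ne_zero.2 hz)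
  have hdist : dist x y ≤ δ := by
    linarith [dist_triangle_right x y z, mem_ball.1 hxz, mem_ball.1 hyz]
  exact hxy.not_ge (hdF x y (hGlim x hxG) (hGlim y hyG) (hδM x hxM y hyM hdist))

end Equicontinuity

section Expansivity

variable {d : ℕ} {T : (Fin d → ℤ) → X → X} {f : X → ℂ} [MeasurableSpace X] {μ : Measure X}

lemma meanSensitiveFun_of_ae_measure_eq_zero (hgen : ∀ᵐ x ∂μ, genericSq μ T f x) {ε : ℝ}
    (hε : 0 < ε) (h : ∀ᵐ x ∂μ, μ {y | dF T f x y ≤ ε} = 0) : MeanSensitiveFun μ T f := by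
  refine ⟨ε, hε, fun A _ hA ↦ ?_⟩
  have hA_freq : ∃ᵐ x ∂μ, x ∈ A := frequently_ae_mem_iff.2 hA.ne'
  obtain ⟨x, hxA, hx, hxnull⟩ := (hA_freq.and_eventually (hgen.and h)).exists
  have hx_ae : ∀ᵐ y ∂μ, ¬dF T f x y ≤ ε := measure_eq_zero_iff_ae_notMem.1 hxnull
  obtain ⟨y, hyA, hy, hxy⟩ := (hA_freq.and_eventually (hgen.and hx_ae)).exists
  exact ⟨x, hxA, y, hyA, hx, hy, not_le.1 hxy⟩

lemma meanExpansiveFun_iff [IsProbabilityMeasure μ]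
    (hT : ∀ j, MeasurePreserving (T j) μ μ) (hf : AEMeasurable f μ) :
    MeanExpansiveFun μ T f ↔ ∃ ε : ℝ, 0 < ε ∧ ∀ᵐ x ∂μ, μ {y | dF T f x y ≤ ε} = 0 := by
  refine exists_congr fun ε ↦ and_congr_right fun _ ↦ ?_
  have hball := nullMeasurableSet_prod_dF_le hT hf ε
  have hcompl : {p : X × X | ε < dF T f p.1 p.2} = {p | dF T f p.1 p.2 ≤ ε}ᶜ := by
    ext p
    exact (not_le (a := dF T f p.1 p.2)).symm
  rw [hcompl, prob_compl_eq_one_iff₀ hball, measure_prod_eq_zero_iff hball]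
  rfl

end Expansivity

theorem stmt16_general {d : ℕ} [MetricSpace X] [MeasurableSpace X] [OpensMeasurableSpace X]
    (T : (Fin d → ℤ) → X → X) (hTadd : ∀ i j, T (i + j) = T i ∘ T j)
    (μ : Measure X) [IsProbabilityMeasure μ] [μ.InnerRegularCompactLTTop]
    (hT : ∀ j, MeasurePreserving (T j) μ μ)
    (herg : ∀ A : Set X, MeasurableSet A → (∀ j, T j ⁻¹' A = A) → μ A = 0 ∨ μ A = 1)
    (f : X → ℂ) (hf : MemLp f 2 μ) :
    [MeanSensitiveFun μ T f,
     MeanExpansiveFun μ T f,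
     ∃ ε : ℝ, 0 < ε ∧ ∀ᵐ x ∂μ, μ {y : X | dF T f x y ≤ ε} = 0,
     ¬ MuFMeanEquicont μ T f].TFAE := by
  tfae_have 2 ↔ 3 := meanExpansiveFun_iff hT hf.aestronglyMeasurable.aemeasurable
  tfae_have 3 → 1 := fun ⟨_, hε, h⟩ ↦
    meanSensitiveFun_of_ae_measure_eq_zero (ae_genericSq hTadd hT herg hf) hε h
  tfae_have 1 → 4 := MeanSensitiveFun.not_muFMeanEquicont hTadd hT herg hf
  tfae_have 4 → 3 := fun hequi ↦ by
    by_contra! hball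
    exact hequi (muFMeanEquicont_of_forall_frequently_measure_ne_zero hTadd hT herg hf hball)
  tfae_finish

/-- for a TDS with an ergodic invariant measure `μ` and `f ∈ L²(X,μ)`,
the following are equivalent: (1) `μ-f`-mean sensitivity; (2) `μ-f`-mean expansivity;
(3) `∃ ε > 0` with `μ(B_ε^f(x)) = 0` for a.e. `x`; (4) not `μ-f`-mean equicontinuous. -/
theorem stmt16 {d : ℕ}
    [MetricSpace X] [CompactSpace X] [MeasurableSpace X] [BorelSpace X]
    (T : (Fin d → ℤ) → X → X)
    (hTc : ∀ j, Continuous (T j))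
    (hTadd : ∀ i j, T (i + j) = T i ∘ T j)
    (μ : Measure X) [IsProbabilityMeasure μ]
    (hT : ∀ j, MeasurePreserving (T j) μ μ)
    (herg : ∀ A : Set X, MeasurableSet A → (∀ j, T j ⁻¹' A = A) → μ A = 0 ∨ μ A = 1)
    (f : X → ℂ) (hf : MemLp f 2 μ) :
    [MeanSensitiveFun μ T f,
     MeanExpansiveFun μ T f,
     ∃ ε : ℝ, 0 < ε ∧ ∀ᵐ x ∂μ, μ {y : X | dF T f x y ≤ ε} = 0,
     ¬ MuFMeanEquicont μ T f].TFAE := by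
  exact stmt16_general T hTadd μ hT herg f hf
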